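/- Let q ∈ [2,3], let H be an n×n contraction (H*H ≤ I), and let L be an n×n Hermitian matrix with I − H*H + (q−1)L ≥ 0. Then the trace function φ_q(A) = Tr[(I − H*H + (q−1)L + H* A^{q−1} H)^{1/(q−1)}] is convex on n×n positive definite matrices: for positive definite A₁, A₂ and t ∈ [0,1], φ_q(tA₁ + (1−t)A₂) ≤ t·φ_q(A₁) + (1−t)·φ_q(A₂). -/

import Mathlib

open Matrix ComplexOrder

/-- Matrix logarithm of a (positive definite) Hermitian matrix, via functional calculus. -/
noncomputable def mlog {n : ℕ} (A : Matrix (Fin n) (Fin n) ℂ) : Matrix (Fin n) (Fin n) ℂ :=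
  cfc Real.log A

/-- Matrix exponential of a Hermitian matrix, via functional calculus. -/
noncomputable def mexp {n : ℕ} (A : Matrix (Fin n) (Fin n) ℂ) : Matrix (Fin n) (Fin n) ℂ :=
  cfc Real.exp A

/-- Real power of a (positive definite) Hermitian matrix, via functional calculus. -/
noncomputable def mpow {n : ℕ} (A : Matrix (Fin n) (Fin n) ℂ) (p : ℝ) : Matrix (Fin n) (Fin n) ℂ :=
  cfc (fun x : ℝ => x ^ p) A

/-- Deformed logarithm `log_q x = (x^(q-1) - 1)/(q-1)`. -/
noncomputable def logq (q x : ℝ) : ℝ := (x ^ (q - 1) - 1) / (q - 1)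

/-- Deformed exponential `exp_q x = (1 + (q-1)x)^(1/(q-1))`, with `exp_1 = exp`. -/
noncomputable def expq (q x : ℝ) : ℝ :=
  if q = 1 then Real.exp x else (1 + (q - 1) * x) ^ (1 / (q - 1))

/-- Deformed logarithm of a positive definite matrix, via functional calculus. -/
noncomputable def mlogq {n : ℕ} (q : ℝ) (A : Matrix (Fin n) (Fin n) ℂ) :
    Matrix (Fin n) (Fin n) ℂ :=
  cfc (logq q) A

/-- Deformed exponential of a Hermitian matrix, via functional calculus. -/
noncomputable def mexpq {m : ℕ} (q : ℝ) (A : Matrix (Fin m) (Fin m) ℂ) :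
    Matrix (Fin m) (Fin m) ℂ :=
  cfc (expq q) A

/-- Real part of the trace. -/
noncomputable def trRe {n : ℕ} (M : Matrix (Fin n) (Fin n) ℂ) : ℝ := (Matrix.trace M).re

/-- The reduced relative entropy `S_H(A | B) = Tr[A log A - H* A H log B - A + B]`. -/
noncomputable def SH {n : ℕ} (H A B : Matrix (Fin n) (Fin n) ℂ) : ℝ :=
  trRe (A * mlog A - Hᴴ * A * H * mlog B - A + B)

/-- The reduced Tsallis relative entropy
`S_{H,q}(A | B) = Tr[A^(2-q) log_q A - H* A^(2-q) H log_q B - A + B]`. -/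
noncomputable def STq {n : ℕ} (H : Matrix (Fin n) (Fin n) ℂ) (q : ℝ)
    (A B : Matrix (Fin n) (Fin n) ℂ) : ℝ :=
  trRe (mpow A (2 - q) * mlogq q A - Hᴴ * mpow A (2 - q) * H * mlogq q B - A + B)


/-- The trace functional φ_q(A) = Tr[(I - H*H + (q-1)L + H* A^(q-1) H)^(1/(q-1))]. -/
noncomputable def phiq {n : ℕ} (q : ℝ) (H L A : Matrix (Fin n) (Fin n) ℂ) : ℝ :=
  trRe (mpow (1 - Hᴴ * H + (q - 1) • L + Hᴴ * mpow A (q - 1) * H) (1 / (q - 1)))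

/-- The matrix of `X` with respect to eigenbases of the Hermitian matrices `A` and `Z`. -/
noncomputable def eigenCoord {n : ℕ} {A Z : Matrix (Fin n) (Fin n) ℂ} (hA : A.IsHermitian)
    (hZ : Z.IsHermitian) (X : Matrix (Fin n) (Fin n) ℂ) : Matrix (Fin n) (Fin n) ℂ :=
  (hA.eigenvectorUnitary : Matrix (Fin n) (Fin n) ℂ)ᴴ * X *
    (hZ.eigenvectorUnitary : Matrix (Fin n) (Fin n) ℂ)

theorem eigenCoord_surjective {n : ℕ} {A Z : Matrix (Fin n) (Fin n) ℂ} (hA : A.IsHermitian)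
    (hZ : Z.IsHermitian) : Function.Surjective (eigenCoord hA hZ) := by
  intro w
  refine ⟨(hA.eigenvectorUnitary : Matrix (Fin n) (Fin n) ℂ) * w *
    (hZ.eigenvectorUnitary : Matrix (Fin n) (Fin n) ℂ)ᴴ, ?_⟩
  have hU : (hA.eigenvectorUnitary : Matrix (Fin n) (Fin n) ℂ)ᴴ * hA.eigenvectorUnitary = 1 :=
    Unitary.coe_star_mul_self _
  have hV : (hZ.eigenvectorUnitary : Matrix (Fin n) (Fin n) ℂ)ᴴ * hZ.eigenvectorUnitary = 1 :=
    Unitary.coe_star_mul_self _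
  simp only [eigenCoord, Matrix.mul_assoc, hV, Matrix.mul_one]
  rw [← Matrix.mul_assoc, hU, Matrix.one_mul]

theorem trRe_conjTranspose_mul_cfc_mul_cfc {n : ℕ} {A Z : Matrix (Fin n) (Fin n) ℂ}
    (hA : A.IsHermitian) (hZ : Z.IsHermitian) (X Y : Matrix (Fin n) (Fin n) ℂ) (f g : ℝ → ℝ) :
    trRe (Xᴴ * cfc f A * Y * cfc g Z) =
      ∑ i, ∑ j, f (hA.eigenvalues i) * g (hZ.eigenvalues j) *
        (star (eigenCoord hA hZ X i j) * eigenCoord hA hZ Y i j).re := by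
  have key : (Xᴴ * cfc f A * Y * cfc g Z).trace =
      ((eigenCoord hA hZ X)ᴴ * diagonal (Complex.ofReal ∘ f ∘ hA.eigenvalues) *
        eigenCoord hA hZ Y * diagonal (Complex.ofReal ∘ g ∘ hZ.eigenvalues)).trace := by
    rw [hA.cfc_eq, hZ.cfc_eq]
    simp only [IsHermitian.cfc, Unitary.conjStarAlgAut_apply, eigenCoord, conjTranspose_mul,
      conjTranspose_conjTranspose, star_eq_conjTranspose, Matrix.mul_assoc]
    rw [Matrix.trace_mul_comm (hZ.eigenvectorUnitary : Matrix (Fin n) (Fin n) ℂ)ᴴ]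
    simp only [Matrix.mul_assoc]
    rfl
  rw [trRe, key, Matrix.trace, Complex.re_sum, Finset.sum_comm]
  refine Finset.sum_congr rfl fun j _ => ?_
  simp only [Matrix.diag_apply, Matrix.mul_apply, Finset.sum_mul,
    Complex.re_sum, conjTranspose_apply, Function.comp_apply, Matrix.diagonal_apply,
    mul_ite, mul_zero, Finset.sum_ite_eq', Finset.mem_univ, if_true]
  refine Finset.sum_congr rfl fun i _ => ?_
  simp [Complex.mul_re, Complex.mul_im]
  ring

theorem trRe_add {n : ℕ} (X Y : Matrix (Fin n) (Fin n) ℂ) : trRe (X + Y) = trRe X + trRe Y := by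
  simp [trRe]

theorem trRe_smul {n : ℕ} (r : ℝ) (X : Matrix (Fin n) (Fin n) ℂ) :
    trRe (r • X) = r * trRe X := by
  simp [trRe]

/-- A functional that is affine in `(A, Z)`, in eigencoordinates. -/
theorem affine_functional_eq_sum {n : ℕ} {A Z : Matrix (Fin n) (Fin n) ℂ}
    (hA : A.IsHermitian) (hZ : Z.IsHermitian) (α β : ℝ) (H W : Matrix (Fin n) (Fin n) ℂ) :
    2 * trRe (Hᴴ * A * W) - α * trRe (Wᴴ * A * W) - β * trRe (Wᴴ * W * Z) =
      ∑ i, ∑ j, (2 * hA.eigenvalues i * (star (eigenCoord hA hZ H i j) *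
          eigenCoord hA hZ W i j).re -
        (α * hA.eigenvalues i + β * hZ.eigenvalues j) *
          Complex.normSq (eigenCoord hA hZ W i j)) := by
  have h₁ := trRe_conjTranspose_mul_cfc_mul_cfc hA hZ H W id 1
  have h₂ := trRe_conjTranspose_mul_cfc_mul_cfc hA hZ W W id 1
  have h₃ := trRe_conjTranspose_mul_cfc_mul_cfc hA hZ W W 1 id
  rw [cfc_id ℝ A hA.isSelfAdjoint, cfc_one ℝ Z hZ.isSelfAdjoint, Matrix.mul_one] at h₁ h₂
  rw [cfc_id ℝ Z hZ.isSelfAdjoint, cfc_one ℝ A hA.isSelfAdjoint, Matrix.mul_one] at h₃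
  rw [h₁, h₂, h₃]
  simp only [Finset.mul_sum, ← Finset.sum_sub_distrib]
  refine Finset.sum_congr rfl fun i _ => Finset.sum_congr rfl fun j _ => ?_
  simp only [id, Pi.one_apply, Complex.normSq_apply, Complex.star_def, Complex.mul_re,
    Complex.conj_re, Complex.conj_im]
  ring

theorem affine_functional_le {n : ℕ} {A Z : Matrix (Fin n) (Fin n) ℂ}
    (hA : A.PosDef) (hZ : Z.PosDef) {α β : ℝ} (hαβ : ∀ a z : ℝ, 0 < a → 0 < z → 0 < α * a + β * z)
    (H W : Matrix (Fin n) (Fin n) ℂ) :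
    2 * trRe (Hᴴ * A * W) - α * trRe (Wᴴ * A * W) - β * trRe (Wᴴ * W * Z) ≤
      ∑ i, ∑ j, hA.1.eigenvalues i ^ 2 / (α * hA.1.eigenvalues i + β * hZ.1.eigenvalues j) *
        Complex.normSq (eigenCoord hA.1 hZ.1 H i j) := by
  rw [affine_functional_eq_sum hA.1 hZ.1]
  refine Finset.sum_le_sum fun i _ => Finset.sum_le_sum fun j _ => ?_
  have hs := hαβ _ _ (hA.eigenvalues_pos i) (hZ.eigenvalues_pos j)
  set a := hA.1.eigenvalues i
  set s := α * a + β * hZ.1.eigenvalues j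
  set h := eigenCoord hA.1 hZ.1 H i j
  set w := eigenCoord hA.1 hZ.1 W i j
  have key : a ^ 2 / s * Complex.normSq h -
      (2 * a * (star h * w).re - s * Complex.normSq w) =
      ((a * h.re - s * w.re) ^ 2 + (a * h.im - s * w.im) ^ 2) / s := by
    simp only [Complex.normSq_apply, Complex.star_def, Complex.mul_re, Complex.conj_re,
      Complex.conj_im]
    field_simp
    ring
  have : 0 ≤ ((a * h.re - s * w.re) ^ 2 + (a * h.im - s * w.im) ^ 2) / s := by positivity
  linarith

theorem exists_affine_functional_eq {n : ℕ} {A Z : Matrix (Fin n) (Fin n) ℂ}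
    (hA : A.PosDef) (hZ : Z.PosDef) {α β : ℝ} (hαβ : ∀ a z : ℝ, 0 < a → 0 < z → 0 < α * a + β * z)
    (H : Matrix (Fin n) (Fin n) ℂ) : ∃ W : Matrix (Fin n) (Fin n) ℂ,
    2 * trRe (Hᴴ * A * W) - α * trRe (Wᴴ * A * W) - β * trRe (Wᴴ * W * Z) =
      ∑ i, ∑ j, hA.1.eigenvalues i ^ 2 / (α * hA.1.eigenvalues i + β * hZ.1.eigenvalues j) *
        Complex.normSq (eigenCoord hA.1 hZ.1 H i j) := by
  obtain ⟨W, hW⟩ := eigenCoord_surjective hA.1 hZ.1 (Matrix.of fun i j =>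
    ((hA.1.eigenvalues i / (α * hA.1.eigenvalues i + β * hZ.1.eigenvalues j) : ℝ) : ℂ) *
      eigenCoord hA.1 hZ.1 H i j)
  refine ⟨W, ?_⟩
  rw [affine_functional_eq_sum hA.1 hZ.1, hW]
  refine Finset.sum_congr rfl fun i _ => Finset.sum_congr rfl fun j _ => ?_
  have hs := hαβ _ _ (hA.eigenvalues_pos i) (hZ.eigenvalues_pos j)
  simp only [Matrix.of_apply, Complex.normSq_apply, Complex.star_def, Complex.mul_re,
    Complex.mul_im, Complex.conj_re, Complex.conj_im, Complex.ofReal_re, Complex.ofReal_im]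
  set a := hA.1.eigenvalues i
  set s := α * a + β * hZ.1.eigenvalues j
  field_simp
  ring

theorem posDef_convex_combination {n : ℕ} {A₁ A₂ : Matrix (Fin n) (Fin n) ℂ} (hA₁ : A₁.PosDef)
    (hA₂ : A₂.PosDef) {t : ℝ} (ht : t ∈ Set.Icc (0 : ℝ) 1) :
    (t • A₁ + (1 - t) • A₂).PosDef := by
  rcases ht.1.eq_or_lt with rfl | h0
  · simpa using hA₂
  · exact (hA₁.smul h0).add_posSemidef (hA₂.posSemidef.smul (sub_nonneg.2 ht.2))

/-- Joint convexity of `(A, Z) ↦ ⟨AH, (α L_A + β R_Z)⁻¹ (AH)⟩`, in eigencoordinates. -/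
theorem sum_sq_div_convex {n : ℕ} {A₁ A₂ Z₁ Z₂ A Z : Matrix (Fin n) (Fin n) ℂ}
    (hA₁ : A₁.PosDef) (hA₂ : A₂.PosDef) (hZ₁ : Z₁.PosDef) (hZ₂ : Z₂.PosDef)
    (hA : A.PosDef) (hZ : Z.PosDef) {t : ℝ} (ht : t ∈ Set.Icc (0 : ℝ) 1)
    (hAt : A = t • A₁ + (1 - t) • A₂) (hZt : Z = t • Z₁ + (1 - t) • Z₂)
    {α β : ℝ} (hαβ : ∀ a z : ℝ, 0 < a → 0 < z → 0 < α * a + β * z)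
    (H : Matrix (Fin n) (Fin n) ℂ) :
    ∑ i, ∑ j, hA.1.eigenvalues i ^ 2 / (α * hA.1.eigenvalues i + β * hZ.1.eigenvalues j) *
        Complex.normSq (eigenCoord hA.1 hZ.1 H i j) ≤
      t * ∑ i, ∑ j, hA₁.1.eigenvalues i ^ 2 /
          (α * hA₁.1.eigenvalues i + β * hZ₁.1.eigenvalues j) *
          Complex.normSq (eigenCoord hA₁.1 hZ₁.1 H i j) +
        (1 - t) * ∑ i, ∑ j, hA₂.1.eigenvalues i ^ 2 /
          (α * hA₂.1.eigenvalues i + β * hZ₂.1.eigenvalues j) *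
          Complex.normSq (eigenCoord hA₂.1 hZ₂.1 H i j) := by
  obtain ⟨W, hW⟩ := exists_affine_functional_eq hA hZ hαβ H
  rw [← hW]
  have h₁ := mul_le_mul_of_nonneg_left (affine_functional_le hA₁ hZ₁ hαβ H W) ht.1
  have h₂ := mul_le_mul_of_nonneg_left (affine_functional_le hA₂ hZ₂ hαβ H W)
    (sub_nonneg.2 ht.2)
  refine le_trans (le_of_eq ?_) (add_le_add h₁ h₂)
  simp only [hAt, hZt, Matrix.mul_add, Matrix.add_mul, Matrix.mul_smul, Matrix.smul_mul,
    trRe_add, trRe_smul]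
  ring

theorem trRe_mpow_mul_mpow_eq_sum {n : ℕ} {A Z : Matrix (Fin n) (Fin n) ℂ}
    (hA : A.IsHermitian) (hZ : Z.IsHermitian) (H : Matrix (Fin n) (Fin n) ℂ) (p r : ℝ) :
    trRe (Hᴴ * mpow A p * H * mpow Z r) =
      ∑ i, ∑ j, hA.eigenvalues i ^ p * hZ.eigenvalues j ^ r *
        Complex.normSq (eigenCoord hA hZ H i j) := by
  rw [mpow, mpow, trRe_conjTranspose_mul_cfc_mul_cfc hA hZ]
  refine Finset.sum_congr rfl fun i _ => Finset.sum_congr rfl fun j _ => ?_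
  simp only [Complex.normSq_apply, Complex.star_def, Complex.mul_re,
    Complex.conj_re, Complex.conj_im]
  ring

/-- The function `a ^ p * z ^ (1 - p)` is a superposition of `a ^ 2 / (a + s * z)`. -/
theorem exists_measure_rpow_mul_rpow_eq_integral {p : ℝ} (hp : p ∈ Set.Ioo (1 : ℝ) 2) :
    ∃ μ : MeasureTheory.Measure ℝ, ∀ a z : ℝ, 0 < a → 0 < z →
      MeasureTheory.IntegrableOn (fun s => s ^ (p - 2) * (a ^ 2 / (1 * a + s * z))) (Set.Ioi 0) μ ∧
      a ^ p * z ^ (1 - p) = ∫ s in Set.Ioi 0, s ^ (p - 2) * (a ^ 2 / (1 * a + s * z)) ∂μ := by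
  have hp' : p - 1 ∈ Set.Ioo (0 : ℝ) 1 := ⟨by linarith [hp.1], by linarith [hp.2]⟩
  obtain ⟨μ, hμ⟩ := Real.exists_measure_rpow_eq_integral_rpowIntegrand₀₁ hp'
  refine ⟨μ, fun a z ha hz => ?_⟩
  obtain ⟨hint, heq⟩ := hμ (a / z) (div_pos ha hz).le
  have hEq : Set.EqOn (fun s => a * Real.rpowIntegrand₀₁ (p - 1) s (a / z))
      (fun s => s ^ (p - 2) * (a ^ 2 / (1 * a + s * z))) (Set.Ioi 0) := by
    intro s hs
    have hs' : (0 : ℝ) < s := hs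
    simp only [Real.rpowIntegrand₀₁_eq_pow_div hp' hs'.le (div_pos ha hz).le]
    rw [show p - 1 - 1 = p - 2 by ring]
    field_simp
    ring
  refine ⟨MeasureTheory.IntegrableOn.congr_fun (hint.const_mul a) hEq measurableSet_Ioi, ?_⟩
  rw [← MeasureTheory.setIntegral_congr_fun measurableSet_Ioi hEq,
    MeasureTheory.integral_const_mul, ← heq, Real.div_rpow ha.le hz.le,
    Real.rpow_sub_one ha.ne', show 1 - p = -(p - 1) by ring, Real.rpow_neg hz.le]
  field_simp

/-- Ando's convexity theorem: `(A, Z) ↦ Tr (H* A ^ p H Z ^ (1 - p))` is jointly convex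
for `p ∈ [1, 2]`. -/
theorem trRe_mpow_mul_mpow_convex {n : ℕ} {A₁ A₂ Z₁ Z₂ : Matrix (Fin n) (Fin n) ℂ}
    (hA₁ : A₁.PosDef) (hA₂ : A₂.PosDef) (hZ₁ : Z₁.PosDef) (hZ₂ : Z₂.PosDef)
    {t : ℝ} (ht : t ∈ Set.Icc (0 : ℝ) 1) {p : ℝ} (hp : p ∈ Set.Icc (1 : ℝ) 2)
    (H : Matrix (Fin n) (Fin n) ℂ) :
    trRe (Hᴴ * mpow (t • A₁ + (1 - t) • A₂) p * H * mpow (t • Z₁ + (1 - t) • Z₂) (1 - p)) ≤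
      t * trRe (Hᴴ * mpow A₁ p * H * mpow Z₁ (1 - p)) +
        (1 - t) * trRe (Hᴴ * mpow A₂ p * H * mpow Z₂ (1 - p)) := by
  have hA := posDef_convex_combination hA₁ hA₂ ht
  have hZ := posDef_convex_combination hZ₁ hZ₂ ht
  rw [trRe_mpow_mul_mpow_eq_sum hA.1 hZ.1, trRe_mpow_mul_mpow_eq_sum hA₁.1 hZ₁.1,
    trRe_mpow_mul_mpow_eq_sum hA₂.1 hZ₂.1]
  rcases hp.1.eq_or_lt with rfl | hp1
  · have hfun : ∀ a z : ℝ, 0 < a → a ^ (1 : ℝ) * z ^ (1 - 1 : ℝ) = a ^ 2 / (1 * a + 0 * z) := by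
      intro a z ha
      simp
      field_simp
    simp only [hfun _ _ (hA.eigenvalues_pos _), hfun _ _ (hA₁.eigenvalues_pos _),
      hfun _ _ (hA₂.eigenvalues_pos _)]
    exact sum_sq_div_convex hA₁ hA₂ hZ₁ hZ₂ hA hZ ht rfl rfl (fun a z ha _ => by simpa) H
  rcases hp.2.eq_or_lt with rfl | hp2
  · have hfun : ∀ a z : ℝ, 0 < z → a ^ (2 : ℝ) * z ^ (1 - 2 : ℝ) = a ^ 2 / (0 * a + 1 * z) := by
      intro a z hz
      rw [show (1 - 2 : ℝ) = -1 by norm_num, Real.rpow_neg_one, Real.rpow_two]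
      simp [div_eq_mul_inv]
    simp only [hfun _ _ (hZ.eigenvalues_pos _), hfun _ _ (hZ₁.eigenvalues_pos _),
      hfun _ _ (hZ₂.eigenvalues_pos _)]
    exact sum_sq_div_convex hA₁ hA₂ hZ₁ hZ₂ hA hZ ht rfl rfl (fun a z _ hz => by simpa) H
  obtain ⟨μ, hμ⟩ := exists_measure_rpow_mul_rpow_eq_integral ⟨hp1, hp2⟩
  have hrep : ∀ {A Z : Matrix (Fin n) (Fin n) ℂ} (hA : A.PosDef) (hZ : Z.PosDef),
      MeasureTheory.IntegrableOn (fun s => s ^ (p - 2) * ∑ i, ∑ j, hA.1.eigenvalues i ^ 2 /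
        (1 * hA.1.eigenvalues i + s * hZ.1.eigenvalues j) *
        Complex.normSq (eigenCoord hA.1 hZ.1 H i j)) (Set.Ioi 0) μ ∧
      ∑ i, ∑ j, hA.1.eigenvalues i ^ p * hZ.1.eigenvalues j ^ (1 - p) *
        Complex.normSq (eigenCoord hA.1 hZ.1 H i j) =
      ∫ s in Set.Ioi 0, s ^ (p - 2) * ∑ i, ∑ j, hA.1.eigenvalues i ^ 2 /
        (1 * hA.1.eigenvalues i + s * hZ.1.eigenvalues j) *
        Complex.normSq (eigenCoord hA.1 hZ.1 H i j) ∂μ := by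
    intro A Z hA hZ
    have hint := fun i j => ((hμ _ _ (hA.eigenvalues_pos i) (hZ.eigenvalues_pos j)).1.mul_const
      (Complex.normSq (eigenCoord hA.1 hZ.1 H i j)))
    simp only [Finset.mul_sum, ← mul_assoc]
    simp only [mul_assoc] at hint ⊢
    simp only [← mul_assoc (_ ^ (p - 2) : ℝ)] at hint ⊢
    refine ⟨MeasureTheory.integrable_finsetSum _ fun i _ =>
      MeasureTheory.integrable_finsetSum _ fun j _ => hint i j, ?_⟩
    rw [MeasureTheory.integral_finsetSum _ fun i _ =>
      MeasureTheory.integrable_finsetSum _ fun j _ => hint i j]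
    refine Finset.sum_congr rfl fun i _ => ?_
    rw [MeasureTheory.integral_finsetSum _ fun j _ => hint i j]
    refine Finset.sum_congr rfl fun j _ => ?_
    rw [MeasureTheory.integral_mul_const,
      ← (hμ _ _ (hA.eigenvalues_pos i) (hZ.eigenvalues_pos j)).2, mul_assoc]
  rw [(hrep hA hZ).2, (hrep hA₁ hZ₁).2, (hrep hA₂ hZ₂).2, ← MeasureTheory.integral_const_mul,
    ← MeasureTheory.integral_const_mul,
    ← MeasureTheory.integral_add ((hrep hA₁ hZ₁).1.const_mul t)
      ((hrep hA₂ hZ₂).1.const_mul (1 - t))]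
  refine MeasureTheory.setIntegral_mono_on (hrep hA hZ).1
    (((hrep hA₁ hZ₁).1.const_mul t).add ((hrep hA₂ hZ₂).1.const_mul (1 - t)))
    measurableSet_Ioi fun s hs => ?_
  have hs' : (0 : ℝ) < s := hs
  have h := mul_le_mul_of_nonneg_left (sum_sq_div_convex hA₁ hA₂ hZ₁ hZ₂ hA hZ ht rfl rfl
    (α := 1) (β := s) (fun a z ha hz => by positivity) H) (Real.rpow_nonneg hs'.le (p - 2))
  refine h.trans (le_of_eq ?_)
  ring

theorem rpow_inv_le_young {p y z : ℝ} (hp : 1 ≤ p) (hy : 0 ≤ y) (hz : 0 < z) :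
    y ^ (1 / p) ≤ 1 / p * (y * z ^ (1 - p)) + (1 - 1 / p) * z := by
  have hp0 : 0 < p := by linarith
  have h := Real.geom_mean_le_arith_mean2_weighted (w₁ := 1 / p) (w₂ := 1 - 1 / p)
    (p₁ := y * z ^ (1 - p)) (p₂ := z) (by positivity)
    (sub_nonneg.2 ((div_le_one hp0).2 hp)) (by positivity) hz.le (by ring)
  refine le_trans (le_of_eq ?_) h
  rw [Real.mul_rpow hy (by positivity), ← Real.rpow_mul hz.le, mul_assoc, ← Real.rpow_add hz,
    show (1 - p) * (1 / p) + (1 - 1 / p) = 0 by field_simp; ring, Real.rpow_zero, mul_one]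

/-- The variational upper bound of `Tr Y ^ (1 / p)`. -/
theorem trRe_mpow_inv_le {n : ℕ} {Y Z : Matrix (Fin n) (Fin n) ℂ} (hY : Y.PosSemidef)
    (hZ : Z.PosDef) {p : ℝ} (hp : 1 ≤ p) :
    trRe (mpow Y (1 / p)) ≤ 1 / p * trRe (Y * mpow Z (1 - p)) + (1 - 1 / p) * trRe Z := by
  have h₁ := trRe_conjTranspose_mul_cfc_mul_cfc hY.1 hZ.1 1 1 (fun x => x ^ (1 / p)) 1
  have h₂ := trRe_conjTranspose_mul_cfc_mul_cfc hY.1 hZ.1 1 1 id (fun x => x ^ (1 - p))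
  have h₃ := trRe_conjTranspose_mul_cfc_mul_cfc hY.1 hZ.1 1 1 1 id
  rw [cfc_one ℝ Z hZ.1.isSelfAdjoint, Matrix.mul_one] at h₁
  rw [cfc_id ℝ Y hY.1.isSelfAdjoint] at h₂
  rw [cfc_id ℝ Z hZ.1.isSelfAdjoint, cfc_one ℝ Y hY.1.isSelfAdjoint] at h₃
  simp only [conjTranspose_one, Matrix.mul_one, Matrix.one_mul] at h₁ h₂ h₃
  rw [mpow, mpow, h₁, h₂, h₃]
  simp only [Finset.mul_sum, ← Finset.sum_add_distrib]
  refine Finset.sum_le_sum fun i _ => Finset.sum_le_sum fun j _ => ?_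
  set x := eigenCoord hY.1 hZ.1 1 i j
  have hx : 0 ≤ (star x * x).re := by
    simp only [Complex.star_def, Complex.mul_re, Complex.conj_re, Complex.conj_im]
    nlinarith [sq_nonneg x.re, sq_nonneg x.im]
  have h := mul_le_mul_of_nonneg_right
    (rpow_inv_le_young hp (hY.eigenvalues_nonneg i) (hZ.eigenvalues_pos j)) hx
  simp only [Pi.one_apply, id]
  linarith

theorem trRe_cfc {n : ℕ} {Y : Matrix (Fin n) (Fin n) ℂ} (hY : Y.IsHermitian) (f : ℝ → ℝ) :
    trRe (cfc f Y) = ∑ i, f (hY.eigenvalues i) := by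
  rw [trRe, hY.cfc_eq, IsHermitian.cfc, Unitary.conjStarAlgAut_apply, Matrix.trace_mul_comm,
    ← Matrix.mul_assoc, Unitary.coe_star_mul_self, Matrix.one_mul]
  simp [Matrix.trace]

theorem posSemidef_mpow {n : ℕ} {A : Matrix (Fin n) (Fin n) ℂ} (hA : A.PosSemidef) (p : ℝ) :
    (mpow A p).PosSemidef := by
  rw [mpow, hA.1.cfc_eq, IsHermitian.cfc, Unitary.conjStarAlgAut_apply]
  refine PosSemidef.mul_mul_conjTranspose_same (PosSemidef.diagonal fun i => ?_) _
  simpa using Real.rpow_nonneg (hA.eigenvalues_nonneg i) p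

/-- The approximate minimizer in the variational bound. -/
theorem exists_posDef_variational_le {n : ℕ} {Y : Matrix (Fin n) (Fin n) ℂ} (hY : Y.PosSemidef)
    {p : ℝ} (hp : 1 ≤ p) {ε : ℝ} (hε : 0 < ε) :
    ∃ Z : Matrix (Fin n) (Fin n) ℂ, Z.PosDef ∧
      1 / p * trRe (Y * mpow Z (1 - p)) + (1 - 1 / p) * trRe Z ≤
        ∑ i, (hY.1.eigenvalues i + ε) ^ (1 / p) := by
  have hp0 : 0 < p := by linarith
  have hpos : ∀ i, 0 < hY.1.eigenvalues i + ε := fun i => by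
    linarith [hY.eigenvalues_nonneg i]
  have hY' : IsSelfAdjoint Y := hY.1
  have hcont : ∀ f : ℝ → ℝ, ∀ B : Matrix (Fin n) (Fin n) ℂ, ContinuousOn f (spectrum ℝ B) :=
    fun f B => B.finite_real_spectrum.continuousOn f
  have hfin : ∀ f g : ℝ → ℝ, ContinuousOn g (f '' spectrum ℝ Y) :=
    fun f g => (Y.finite_real_spectrum.image f).continuousOn g
  refine ⟨cfc (fun y => (y + ε) ^ (1 / p)) Y, ?_, ?_⟩
  · rw [hY.1.cfc_eq, IsHermitian.cfc, Unitary.conjStarAlgAut_apply,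
      Matrix.IsUnit.posDef_star_right_conjugate_iff Unitary.isUnit_coe, posDef_diagonal_iff]
    exact fun i => Complex.zero_lt_real.2 (Real.rpow_pos_of_pos (hpos i) _)
  · have hmul : Y * mpow (cfc (fun y => (y + ε) ^ (1 / p)) Y) (1 - p) =
        cfc (fun y => y * ((y + ε) ^ (1 / p)) ^ (1 - p)) Y := by
      rw [mpow, ← cfc_comp' _ _ _ (hfin _ _) (hcont _ _)]
      rw [cfc_mul (fun y => y) _ Y (hcont _ _) (hcont _ _), cfc_id' ℝ Y]
    rw [hmul, trRe_cfc hY.1, trRe_cfc hY.1, Finset.mul_sum, Finset.mul_sum,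
      ← Finset.sum_add_distrib]
    refine Finset.sum_le_sum fun i _ => ?_
    have hy := hY.eigenvalues_nonneg i
    have hyε := hpos i
    set y := hY.1.eigenvalues i
    have hbound : y * ((y + ε) ^ (1 / p)) ^ (1 - p) ≤ (y + ε) ^ (1 / p) := by
      calc y * ((y + ε) ^ (1 / p)) ^ (1 - p)
          ≤ (y + ε) * ((y + ε) ^ (1 / p)) ^ (1 - p) := by gcongr; linarith
        _ = (y + ε) ^ (1 / p) := by
          rw [← Real.rpow_mul hyε.le, ← Real.rpow_one_add' hyε.le]
          · congr 1
            field_simp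
            ring
          · have : 1 + 1 / p * (1 - p) = 1 / p := by field_simp; ring
            rw [this]
            positivity
    have := mul_le_mul_of_nonneg_left hbound (by positivity : 0 ≤ 1 / p)
    linarith

/-- Convexity of `A ↦ Tr (K + H* A ^ p H) ^ (1 / p)` for `p ∈ [1, 2]` and `K ≥ 0`. -/
theorem trRe_mpow_inv_convex {n : ℕ} {K A₁ A₂ : Matrix (Fin n) (Fin n) ℂ} (hK : K.PosSemidef)
    (hA₁ : A₁.PosDef) (hA₂ : A₂.PosDef) {t : ℝ} (ht : t ∈ Set.Icc (0 : ℝ) 1)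
    {p : ℝ} (hp : p ∈ Set.Icc (1 : ℝ) 2) (H : Matrix (Fin n) (Fin n) ℂ) :
    trRe (mpow (K + Hᴴ * mpow (t • A₁ + (1 - t) • A₂) p * H) (1 / p)) ≤
      t * trRe (mpow (K + Hᴴ * mpow A₁ p * H) (1 / p)) +
        (1 - t) * trRe (mpow (K + Hᴴ * mpow A₂ p * H) (1 / p)) := by
  have hp0 : 0 < p := by linarith [hp.1]
  have hA := posDef_convex_combination hA₁ hA₂ ht
  have hYpos : ∀ {A : Matrix (Fin n) (Fin n) ℂ}, A.PosDef →
      (K + Hᴴ * mpow A p * H).PosSemidef := fun hA =>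
    hK.add ((posSemidef_mpow hA.posSemidef p).conjTranspose_mul_mul_same H)
  have hY₁ := hYpos hA₁
  have hY₂ := hYpos hA₂
  have hlim : ∀ {Y : Matrix (Fin n) (Fin n) ℂ} (hY : Y.PosSemidef),
      Filter.Tendsto (fun ε : ℝ => ∑ i, (hY.1.eigenvalues i + ε) ^ (1 / p))
        (nhdsWithin 0 (Set.Ioi 0)) (nhds (trRe (mpow Y (1 / p)))) := by
    intro Y hY
    rw [mpow, trRe_cfc hY.1]
    refine Filter.Tendsto.mono_left ?_ nhdsWithin_le_nhds
    refine tendsto_finsetSum _ fun i _ => ?_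
    have : ContinuousAt (fun ε : ℝ => (hY.1.eigenvalues i + ε) ^ (1 / p)) 0 :=
      ContinuousAt.rpow_const (by fun_prop) (Or.inr (by positivity))
    simpa [ContinuousAt] using this
  refine ge_of_tendsto (((hlim hY₁).const_mul t).add ((hlim hY₂).const_mul (1 - t))) ?_
  filter_upwards [self_mem_nhdsWithin] with ε hε
  obtain ⟨Z₁, hZ₁, h₁⟩ := exists_posDef_variational_le hY₁ hp.1 hε
  obtain ⟨Z₂, hZ₂, h₂⟩ := exists_posDef_variational_le hY₂ hp.1 hε
  have hZ := posDef_convex_combination hZ₁ hZ₂ ht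
  obtain ⟨C, rfl⟩ : ∃ C : Matrix (Fin n) (Fin n) ℂ, K = Cᴴ * C := by
    open scoped MatrixOrder in
    exact CStarAlgebra.nonneg_iff_eq_star_mul_self.1 hK.nonneg
  have hone : mpow (1 : Matrix (Fin n) (Fin n) ℂ) p = 1 := by
    rw [mpow, cfc_apply_one]
    simp
  have hconvC := trRe_mpow_mul_mpow_convex PosDef.one PosDef.one hZ₁ hZ₂ ht hp C
  rw [← add_smul, add_sub_cancel, one_smul, hone, Matrix.mul_one] at hconvC
  have hconvH := trRe_mpow_mul_mpow_convex hA₁ hA₂ hZ₁ hZ₂ ht hp H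
  have hvar := trRe_mpow_inv_le (hYpos hA) hZ hp.1
  simp only [Matrix.add_mul, trRe_add, trRe_smul] at h₁ h₂ hvar
  have hp' : 0 ≤ 1 / p := by positivity
  have h₁' := mul_le_mul_of_nonneg_left h₁ ht.1
  have h₂' := mul_le_mul_of_nonneg_left h₂ (sub_nonneg.2 ht.2)
  have h₃ := mul_le_mul_of_nonneg_left (add_le_add hconvC hconvH) hp'
  linarith

/-- Convexity of φ_q on positive definite matrices for q ∈ [2,3]. -/
theorem stmt7 {n : ℕ} (q : ℝ) (hq : q ∈ Set.Icc (2 : ℝ) 3)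
    (H L : Matrix (Fin n) (Fin n) ℂ) (hH : (1 - Hᴴ * H).PosSemidef)
    (hL : L.IsHermitian) (hpos : (1 - Hᴴ * H + (q - 1) • L).PosSemidef)
    (A₁ A₂ : Matrix (Fin n) (Fin n) ℂ) (hA₁ : A₁.PosDef) (hA₂ : A₂.PosDef)
    (t : ℝ) (ht : t ∈ Set.Icc (0 : ℝ) 1) :
    phiq q H L (t • A₁ + (1 - t) • A₂) ≤ t * phiq q H L A₁ + (1 - t) * phiq q H L A₂ := by
  have hp : q - 1 ∈ Set.Icc (1 : ℝ) 2 := ⟨by linarith [hq.1], by linarith [hq.2]⟩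
  exact trRe_mpow_inv_convex hpos hA₁ hA₂ ht hp H
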